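/- Let $C$ be an $[n,k,d]$ linear code with $h$-level hierarchical locality with parameters $[(r_1,\delta_1),\ldots,(r_h,\delta_h)]$. Then $d \leq n - k + 1 - \sum_{\ell=1}^{h-1}(\lceil k/r_\ell \rceil - 1)(\delta_\ell - \delta_{\ell+1}) - (\lceil k/r_h \rceil - 1)(\delta_h - 1)$. -/

import Mathlib

/-!
Peel off one local code: let `P` be a punctured code `C|_S` of dimension at most `r₁` and minimum
distance at least `δ₁`, and let `D` be the subcode of words of `C` vanishing on `S`. Then
`dim C = dim P + dim D`, and the supports of `P` and `D` are disjoint inside that of `C`. If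
`D ≠ 0`, the bound for `P` (with the remaining levels and distance `δ₁`) plus the bound for `D`
(which inherits the locality of `C` and its distance `d`) gives the bound for `C`, because
`x ↦ ⌈x / r⌉` is subadditive. If `D = 0`, then `dim C ≤ r₁`, so the first level contributes nothing
and it can be dropped. With no levels left, the claim is the Singleton bound.
-/

open Finset

variable (F : Type*) [Field F] [DecidableEq F] (n : ℕ)

/-- The linear map restricting a word of length `n` to the coordinates in `S`
(setting the remaining coordinates to zero). -/
def puncProj (S : Finset (Fin n)) : (Fin n → F) →ₗ[F] (Fin n → F) where
  toFun c := fun j => if j ∈ S then c j else 0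
  map_add' x y := by funext j; by_cases h : j ∈ S <;> simp [h]
  map_smul' a x := by funext j; by_cases h : j ∈ S <;> simp [h]

/-- The punctured code of `C` obtained by restricting to the coordinate set `S`. -/
def puncture (C : Submodule F (Fin n → F)) (S : Finset (Fin n)) :
    Submodule F (Fin n → F) :=
  C.map (puncProj F n S)

/-- `C` has all-symbol `(r,δ)`-locality: every coordinate in the support of `C`
lies in the support of a punctured code of dimension at most `r` and minimum
distance at least `δ`. -/
def HasLocality (C : Submodule F (Fin n → F)) (r δ : ℕ) : Prop :=
  ∀ i : Fin n, (∃ c ∈ C, c i ≠ 0) →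
    ∃ S : Finset (Fin n),
      (∃ c ∈ puncture F n C S, c i ≠ 0) ∧
      Module.finrank F ↥(puncture F n C S) ≤ r ∧
      ∀ c ∈ puncture F n C S, c ≠ 0 → δ ≤ hammingNorm c

/-- `d` is the minimum Hamming distance of the linear code `C`. -/
def IsMinDist (C : Submodule F (Fin n → F)) (d : ℕ) : Prop :=
  (∃ c ∈ C, c ≠ 0 ∧ hammingNorm c = d) ∧ ∀ c ∈ C, c ≠ 0 → d ≤ hammingNorm c

/-- `C` has `h`-level hierarchical locality with the given list of locality
parameters `[(r₁,δ₁),…,(r_h,δ_h)]`. -/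
def HasHierLocality (C : Submodule F (Fin n → F)) : List (ℕ × ℕ) → Prop
  | [] => True
  | (r, δ) :: rest =>
      ∀ i : Fin n, (∃ c ∈ C, c i ≠ 0) →
        ∃ S : Finset (Fin n),
          (∃ c ∈ puncture F n C S, c i ≠ 0) ∧
          Module.finrank F ↥(puncture F n C S) ≤ r ∧
          (∀ c ∈ puncture F n C S, c ≠ 0 → δ ≤ hammingNorm c) ∧
          HasHierLocality (puncture F n C S) rest

section Codes

variable {K : Type*} [Field K] {n}

/-- The subcode of `C` of the words vanishing on `S`, that is, `C` shortened at `S`; as for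
`puncture`, the coordinates in `S` are kept. -/
def shorten (C : Submodule K (Fin n → K)) (S : Finset (Fin n)) : Submodule K (Fin n → K) :=
  C ⊓ LinearMap.ker (puncProj K n S)

open Classical in
/-- The support of a code: the coordinates at which some codeword is nonzero. -/
noncomputable def codeSupport (C : Submodule K (Fin n → K)) : Finset (Fin n) :=
  {i | ∃ c ∈ C, c i ≠ 0}

variable {C D : Submodule K (Fin n → K)} {S : Finset (Fin n)}

theorem puncProj_apply (c : Fin n → K) (i : Fin n) :
    puncProj K n S c i = if i ∈ S then c i else 0 := rfl

theorem mem_shorten {c : Fin n → K} : c ∈ shorten C S ↔ c ∈ C ∧ ∀ i ∈ S, c i = 0 := by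
  simp [shorten, funext_iff, puncProj_apply]

theorem mem_codeSupport {i : Fin n} : i ∈ codeSupport C ↔ ∃ c ∈ C, c i ≠ 0 := by
  simp [codeSupport]

theorem shorten_le : shorten C S ≤ C := inf_le_left

theorem codeSupport_mono (h : D ≤ C) : codeSupport D ⊆ codeSupport C := by
  intro i hi
  obtain ⟨c, hc, hci⟩ := mem_codeSupport.1 hi
  exact mem_codeSupport.2 ⟨c, h hc, hci⟩

theorem codeSupport_puncture : codeSupport (puncture K n C S) = codeSupport C ∩ S := by
  ext i
  simp only [mem_codeSupport, puncture, Submodule.mem_map, exists_exists_and_eq_and,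
    puncProj_apply, mem_inter]
  by_cases hi : i ∈ S <;> simp [hi]

theorem disjoint_codeSupport_shorten : Disjoint S (codeSupport (shorten C S)) := by
  refine disjoint_left.2 fun i hiS hi ↦ ?_
  obtain ⟨c, hc, hci⟩ := mem_codeSupport.1 hi
  exact hci ((mem_shorten.1 hc).2 i hiS)

variable (C S) in
theorem card_codeSupport_puncture_add_card_codeSupport_shorten_le :
    #(codeSupport (puncture K n C S)) + #(codeSupport (shorten C S)) ≤ #(codeSupport C) := by
  rw [codeSupport_puncture, ← card_union_of_disjoint
    (disjoint_codeSupport_shorten.mono_left inter_subset_right)]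
  exact card_le_card (union_subset inter_subset_left (codeSupport_mono shorten_le))

theorem puncture_mono (h : D ≤ C) : puncture K n D S ≤ puncture K n C S :=
  Submodule.map_mono h

variable (C S) in
theorem puncture_puncture (T : Finset (Fin n)) :
    puncture K n (puncture K n C S) T = puncture K n C (S ∩ T) := by
  rw [puncture, puncture, puncture, ← Submodule.map_comp]
  congr 1
  ext c i
  simp [puncProj_apply, ← ite_and, and_comm]

variable (C S) in
theorem finrank_puncture_add_finrank_shorten :
    Module.finrank K (puncture K n C S) + Module.finrank K (shorten C S) = Module.finrank K C := by
  have hker : LinearMap.ker ((puncProj K n S).domRestrict C) =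
      (shorten C S).comap C.subtype := by
    ext c
    simp [shorten]
  rw [← LinearMap.finrank_range_add_finrank_ker ((puncProj K n S).domRestrict C),
    LinearMap.range_domRestrict, hker, (Submodule.comapSubtypeEquivOfLe shorten_le).finrank_eq,
    puncture]

variable (C S) in
theorem finrank_puncture_le_card :
    Module.finrank K (puncture K n C S) ≤ #S := by
  have hspan : puncture K n C S ≤
      Submodule.span K (Set.range fun i : S ↦ (Pi.single (i : Fin n) 1 : Fin n → K)) := by
    rintro _ ⟨c, -, rfl⟩
    have hsum : puncProj K n S c = ∑ i : S, c i • (Pi.single (i : Fin n) 1 : Fin n → K) := by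
      rw [sum_coe_sort S fun i ↦ c i • (Pi.single i 1 : Fin n → K)]
      ext j
      simp [puncProj_apply, Finset.sum_apply, Pi.single_apply]
    rw [hsum]
    exact sum_mem fun i _ ↦ Submodule.smul_mem _ _ (Submodule.subset_span ⟨i, rfl⟩)
  calc Module.finrank K (puncture K n C S)
      ≤ Set.finrank K (Set.range fun i : S ↦ (Pi.single (i : Fin n) 1 : Fin n → K)) :=
        Submodule.finrank_mono hspan
    _ ≤ Fintype.card S := finrank_range_le_card _
    _ = #S := Fintype.card_coe S

variable [DecidableEq K] {d : ℕ}

theorem hammingNorm_le_card_codeSupport {c : Fin n → K} (hc : c ∈ C) :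
    hammingNorm c ≤ #(codeSupport C) :=
  card_le_card fun _ hi ↦ mem_codeSupport.2 ⟨c, hc, (mem_filter.1 hi).2⟩

theorem hammingNorm_le_card_codeSupport_sdiff {c : Fin n → K} (hc : c ∈ shorten C S) :
    hammingNorm c ≤ #(codeSupport C \ S) := by
  refine (hammingNorm_le_card_codeSupport hc).trans (card_le_card ?_)
  exact subset_sdiff.2 ⟨codeSupport_mono shorten_le, disjoint_codeSupport_shorten.symm⟩

theorem singleton_bound (hC : C ≠ ⊥) (hd : ∀ c ∈ C, c ≠ 0 → d ≤ hammingNorm c) :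
    d + Module.finrank K C ≤ #(codeSupport C) + 1 := by
  have hdle : d ≤ #(codeSupport C) := by
    obtain ⟨c, hc, hc0⟩ := C.ne_bot_iff.1 hC
    exact (hd c hc hc0).trans (hammingNorm_le_card_codeSupport hc)
  obtain ⟨S, hS, hScard⟩ := exists_subset_card_eq (Nat.sub_le #(codeSupport C) (d - 1))
  have hshorten : shorten C S = ⊥ := by
    refine (Submodule.eq_bot_iff _).2 fun c hc ↦ by_contra fun hc0 ↦ ?_
    have hpos := hammingNorm_pos_iff.2 hc0
    have hlow := hd c (shorten_le hc) hc0
    have hupp := hammingNorm_le_card_codeSupport_sdiff hc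
    rw [card_sdiff_of_subset hS] at hupp
    omega
  have hdim := finrank_puncture_add_finrank_shorten C S
  have hpunc := finrank_puncture_le_card C S
  rw [hshorten, finrank_bot] at hdim
  omega

variable {L : List (ℕ × ℕ)}

theorem HasHierLocality.mono (hloc : HasHierLocality K n C L) (h : D ≤ C) :
    HasHierLocality K n D L := by
  induction L generalizing C D with
  | nil => trivial
  | cons p L ih =>
    intro i hi
    obtain ⟨S, hiS, hdim, hdist, hrest⟩ := hloc i (mem_codeSupport.1
      (codeSupport_mono h (mem_codeSupport.2 hi)))
    have hmem : i ∈ codeSupport C ∩ S := by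
      rw [← codeSupport_puncture]
      exact mem_codeSupport.2 hiS
    refine ⟨S, mem_codeSupport.1 ?_, (Submodule.finrank_mono (puncture_mono h)).trans hdim,
      fun c hc ↦ hdist c (puncture_mono h hc), ih hrest (puncture_mono h)⟩
    rw [codeSupport_puncture]
    exact mem_inter.2 ⟨mem_codeSupport.2 hi, (mem_inter.1 hmem).2⟩

theorem HasHierLocality.tail {p : ℕ × ℕ} (hloc : HasHierLocality K n C (p :: L)) :
    HasHierLocality K n C L := by
  cases L with
  | nil => trivial
  | cons q L =>
    intro i hi
    obtain ⟨S, hiS, -, -, hrest⟩ := hloc i hi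
    obtain ⟨T, hT⟩ := hrest i hiS
    exact ⟨S ∩ T, by rwa [← puncture_puncture]⟩

end Codes

section Penalty

/-- The first distance `δ₁` of a list of locality parameters, with the convention `δ_{h+1} = 1`
past the last level. -/
def outerDist : List (ℕ × ℕ) → ℕ
  | [] => 1
  | p :: _ => p.2

/-- The amount by which locality with parameters `[(r₁,δ₁),…,(r_h,δ_h)]` lowers the Singleton bound
in dimension `k`: the sum of `(⌈k / r_ℓ⌉ - 1) (δ_ℓ - δ_{ℓ+1})` over all levels, where
`δ_{h+1} = 1`. -/
def hierPenalty : List (ℕ × ℕ) → ℕ → ℤ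
  | [], _ => 0
  | p :: L, k => (⌈(k : ℚ) / p.1⌉ - 1) * ((p.2 : ℤ) - outerDist L) + hierPenalty L k

/-- The distances of a list of locality parameters decrease weakly from level to level, and the
last one is at least `1`. -/
def DistAntitone : List (ℕ × ℕ) → Prop
  | [] => True
  | p :: L => outerDist L ≤ p.2 ∧ DistAntitone L

theorem hierPenalty_add_le {L : List (ℕ × ℕ)} (hL : DistAntitone L) (x y : ℕ) :
    hierPenalty L (x + y) ≤ hierPenalty L x + hierPenalty L y + (outerDist L - 1) := by
  induction L with
  | nil => simp [hierPenalty, outerDist]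
  | cons p L ih =>
    have hceil : ⌈((x + y : ℕ) : ℚ) / p.1⌉ ≤ ⌈(x : ℚ) / p.1⌉ + ⌈(y : ℚ) / p.1⌉ := by
      rw [Nat.cast_add, add_div]
      exact Int.ceil_add_le _ _
    have hgap : (0 : ℤ) ≤ p.2 - outerDist L := sub_nonneg.2 (mod_cast hL.1)
    have hlevel := mul_le_mul_of_nonneg_right hceil hgap
    have hrest := ih hL.2
    rw [hierPenalty, hierPenalty, hierPenalty, outerDist]
    linarith

theorem hierPenalty_cons_of_le {p : ℕ × ℕ} {k : ℕ} (hk : 0 < k) (hkp : k ≤ p.1)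
    (L : List (ℕ × ℕ)) : hierPenalty (p :: L) k = hierPenalty L k := by
  have hp : (0 : ℚ) < p.1 := mod_cast hk.trans_le hkp
  have hceil : ⌈(k : ℚ) / p.1⌉ = 1 := by
    rw [Int.ceil_eq_iff, Int.cast_one, sub_self]
    exact ⟨div_pos (mod_cast hk) hp, (div_le_one hp).2 (mod_cast hkp)⟩
  simp [hierPenalty, hceil]

theorem outerDist_ofFn_succ (m : ℕ) (r δ : ℕ → ℕ) :
    outerDist (List.ofFn fun ℓ : Fin (m + 1) ↦ (r ℓ, δ ℓ)) = δ 0 := by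
  simp [outerDist]

theorem hierPenalty_ofFn_succ (m k : ℕ) (r δ : ℕ → ℕ) :
    hierPenalty (List.ofFn fun ℓ : Fin (m + 1) ↦ (r ℓ, δ ℓ)) k =
      (∑ ℓ ∈ range m, (⌈(k : ℚ) / r ℓ⌉ - 1) * ((δ ℓ : ℤ) - δ (ℓ + 1))) +
        (⌈(k : ℚ) / r m⌉ - 1) * ((δ m : ℤ) - 1) := by
  induction m generalizing r δ with
  | zero => simp [hierPenalty, outerDist]
  | succ m ih =>
    have htail := ih (fun ℓ ↦ r (ℓ + 1)) (fun ℓ ↦ δ (ℓ + 1))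
    have houter := outerDist_ofFn_succ m (fun ℓ ↦ r (ℓ + 1)) (fun ℓ ↦ δ (ℓ + 1))
    rw [List.ofFn_succ, hierPenalty, sum_range_succ']
    simp only [Fin.val_succ, Fin.val_zero]
    rw [htail, houter]
    ring

theorem distAntitone_ofFn_succ {m : ℕ} (r : ℕ → ℕ) {δ : ℕ → ℕ}
    (hδ : ∀ ℓ < m, δ (ℓ + 1) ≤ δ ℓ) (hlast : 1 ≤ δ m) :
    DistAntitone (List.ofFn fun ℓ : Fin (m + 1) ↦ (r ℓ, δ ℓ)) := by
  induction m generalizing r δ with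
  | zero => simpa [DistAntitone, outerDist] using hlast
  | succ m ih =>
    rw [List.ofFn_succ]
    refine ⟨?_, ih (fun ℓ ↦ r (ℓ + 1)) (δ := fun ℓ ↦ δ (ℓ + 1))
      (fun ℓ hℓ ↦ hδ (ℓ + 1) (by lia)) hlast⟩
    exact (outerDist_ofFn_succ m (fun ℓ ↦ r (ℓ + 1)) (fun ℓ ↦ δ (ℓ + 1))).trans_le (hδ 0 (by lia))

end Penalty

section Bound

variable {K : Type*} [Field K] [DecidableEq K] {n} {C : Submodule K (Fin n → K)} {d : ℕ}
  {L : List (ℕ × ℕ)}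

theorem add_finrank_add_hierPenalty_le_card_codeSupport (hL : DistAntitone L) (hC : C ≠ ⊥)
    (hd : ∀ c ∈ C, c ≠ 0 → d ≤ hammingNorm c) (hloc : HasHierLocality K n C L) :
    (d : ℤ) + Module.finrank K C + hierPenalty L (Module.finrank K C) ≤ #(codeSupport C) + 1 := by
  induction L generalizing C d with
  | nil => simpa [hierPenalty] using mod_cast singleton_bound hC hd
  | cons p L ihL =>
    induction hk : Module.finrank K C using Nat.strong_induction_on generalizing C with
    | _ k ihk =>
      obtain ⟨c, hc, hc0⟩ := C.ne_bot_iff.1 hC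
      obtain ⟨i, hi⟩ := Function.ne_iff.1 hc0
      obtain ⟨S, ⟨x, hx, hxi⟩, hr, hδ, hrest⟩ := hloc i ⟨c, hc, hi⟩
      set P := puncture K n C S
      set D := shorten C S
      have hP : P ≠ ⊥ := P.ne_bot_iff.2 ⟨x, hx, fun h ↦ hxi (congrFun h i)⟩
      have hPpos : 0 < Module.finrank K P := Submodule.one_le_finrank_iff.2 hP
      have hdim : Module.finrank K P + Module.finrank K D = k :=
        hk ▸ finrank_puncture_add_finrank_shorten C S
      by_cases hD : D = ⊥
      · rw [hD, finrank_bot, add_zero] at hdim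
        rw [hierPenalty_cons_of_le (hdim ▸ hPpos) (hdim ▸ hr), ← hk]
        exact ihL hL.2 hC hd hloc.tail
      · have hboundP := ihL hL.2 hP hδ hrest
        have hboundD := ihk _ (by lia) hD (fun c hc ↦ hd c (shorten_le hc))
          (hloc.mono shorten_le) rfl
        rw [← hierPenalty_cons_of_le hPpos hr] at hboundP
        have hpenalty := hierPenalty_add_le hL (Module.finrank K P) (Module.finrank K D)
        have hsupp := card_codeSupport_puncture_add_card_codeSupport_shorten_le C S
        rw [hdim] at hpenalty
        simp only [outerDist] at hpenalty
        lia

theorem minDist_le_of_hierLocality_general (hL : DistAntitone L) (hd : IsMinDist K n C d)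
    (hloc : HasHierLocality K n C L) :
    (d : ℤ) ≤ #(codeSupport C) - Module.finrank K C + 1 - hierPenalty L (Module.finrank K C) := by
  obtain ⟨⟨c, hc, hc0, -⟩, hmin⟩ := hd
  have hC : C ≠ ⊥ := C.ne_bot_iff.2 ⟨c, hc, hc0⟩
  have hbound := add_finrank_add_hierPenalty_le_card_codeSupport hL hC hmin hloc
  lia

end Bound

/-- Upper bound on the minimum distance of codes with `h`-level hierarchical
locality (Theorem 4). -/
theorem minDist_le_of_hierLocality (h k d : ℕ) (hh : 1 ≤ h) (r δ : ℕ → ℕ)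
    (C : Submodule F (Fin n → F))
    (hk : Module.finrank F C = k) (hkpos : 0 < k)
    (hrpos : ∀ ℓ, ℓ < h → 0 < r ℓ)
    (hrmono : ∀ ℓ, ℓ + 1 < h → r (ℓ + 1) ≤ r ℓ) (hrk : r 0 ≤ k)
    (hδmono : ∀ ℓ, ℓ + 1 < h → δ (ℓ + 1) ≤ δ ℓ) (hδlast : 2 ≤ δ (h - 1))
    (hd : IsMinDist F n C d)
    (hloc : HasHierLocality F n C (List.ofFn fun ℓ : Fin h => (r ℓ, δ ℓ))) :
    (d : ℤ) ≤ (n : ℤ) - k + 1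
      - (∑ ℓ ∈ Finset.range (h - 1),
          (⌈(k : ℚ) / (r ℓ)⌉ - 1) * ((δ ℓ : ℤ) - (δ (ℓ + 1) : ℤ)))
      - (⌈(k : ℚ) / (r (h - 1))⌉ - 1) * ((δ (h - 1) : ℤ) - 1) := by
  obtain ⟨m, rfl⟩ := Nat.exists_eq_add_of_le' hh
  have hL := distAntitone_ofFn_succ r (fun ℓ hℓ ↦ hδmono ℓ (by lia)) (one_le_two.trans hδlast)
  have hbound := minDist_le_of_hierLocality_general hL hd hloc
  have hlen : #(codeSupport C) ≤ n := card_finset_fin_le _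
  rw [hk, hierPenalty_ofFn_succ] at hbound
  rw [Nat.add_sub_cancel]
  lia
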